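/- arXiv:2201.05030 — 2 statements merged into one kernel-verified Lean document; each statement's English description precedes it below -/
import Mathlib

section
/- (Generalized Newton–MacLaurin inequality.) Let n ≥ 1 and let k, l, r, s be integers with n ≥ k > l ≥ 0, r > s ≥ 0, k ≥ r, and l ≥ s. Then for every λ ∈ Γ_k one has [ (σ_k(λ)/C(n,k)) / (σ_l(λ)/C(n,l)) ]^{1/(k−l)} ≤ [ (σ_r(λ)/C(n,r)) / (σ_s(λ)/C(n,s)) ]^{1/(r−s)}, where C(n,j) = n!/(j!(n−j)!) is the binomial coefficient. -/
/-!
Write `p_j = σ_j / C(n, j)`. Newton's inequality `p_j p_{j+2} ≤ p_{j+1}²` holds for all real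
numbers: by Rolle's theorem the derivative of a polynomial with only real roots again has only real
roots, and passing from the roots to the critical points does not change the means `p_j` with
`j < n`. So one may assume `n = j + 2`, where the inequality follows by induction on `n`.
On the cone `Γ_k` the numbers `p_0, …, p_k` are positive, hence `j ↦ log p_j` is concave there, and
the claim compares the slopes of this sequence over `[l, k]` and over `[s, r]`.
-/

open Finset

/-- The `k`-th elementary symmetric function of `lam : Fin n → ℝ`. -/
noncomputable def esymm (n k : ℕ) (lam : Fin n → ℝ) : ℝ :=
  ∑ s ∈ Finset.powersetCard k (Finset.univ : Finset (Fin n)), ∏ i ∈ s, lam i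

/-- The Gårding cone `Γ_k ⊆ ℝ^n`. -/
def GammaCone (n k : ℕ) : Set (Fin n → ℝ) :=
  {lam | ∀ i : ℕ, 1 ≤ i → i ≤ k → 0 < esymm n i lam}

theorem multiset_esymm_cons_succ {R : Type*} [CommSemiring R] (a : R) (s : Multiset R) (k : ℕ) :
    (a ::ₘ s).esymm (k + 1) = s.esymm (k + 1) + a * s.esymm k := by
  simp [Multiset.esymm, Multiset.powersetCard_cons, Multiset.sum_map_mul_left]

theorem multiset_esymm_eq_zero_of_card_lt {R : Type*} [CommSemiring R] {s : Multiset R} {k : ℕ}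
    (h : s.card < k) : s.esymm k = 0 := by
  simp [Multiset.esymm, Multiset.powersetCard_eq_empty k h]

theorem multiset_esymm_mul_esymm_le_sq_of_card_eq {R : Type*} [CommRing R] [LinearOrder R]
    [IsStrictOrderedRing R] {k : ℕ} {s : Multiset R} (hs : s.card = k + 2) :
    2 * (k + 2) * (s.esymm k * s.esymm (k + 2)) ≤ (k + 1) * s.esymm (k + 1) ^ 2 := by
  induction k generalizing s with
  | zero =>
    obtain ⟨a, b, rfl⟩ := Multiset.card_eq_two.1 hs
    have esymm_zero : ({a, b} : Multiset R).esymm 0 = 1 := by simp [Multiset.esymm]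
    rw [esymm_zero, Multiset.insert_eq_cons, Multiset.esymm_pair_one, Multiset.esymm_pair_two]
    push_cast
    linarith [sq_nonneg (a - b)]
  | succ k ih =>
    obtain ⟨a, t, rfl⟩ := s.card_pos_iff_exists_mem.1 (by omega) |>.imp
      fun a ha => Multiset.exists_cons_of_mem ha
    have ht : t.card = k + 2 := by simpa using hs
    simp only [multiset_esymm_cons_succ,
      multiset_esymm_eq_zero_of_card_lt (show t.card < k + 2 + 1 by omega),
      show k + 1 + 2 = k + 2 + 1 from rfl, show k + 1 + 1 = k + 2 from rfl, zero_add]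
    set A := t.esymm k
    set B := t.esymm (k + 1)
    set C := t.esymm (k + 2)
    have sum_of_squares :
        (k + 2) * ((((k + 1 : ℕ) : R) + 1) * (C + a * B) ^ 2
            - 2 * ((k + 1 : ℕ) + 2) * ((B + a * A) * (a * C)))
          = (a * B - (k + 2) * C) ^ 2
            + (k + 3) * a ^ 2 * ((k + 1) * B ^ 2 - 2 * (k + 2) * (A * C)) := by
      push_cast
      ring
    have ih_nonneg := sub_nonneg.2 (ih ht)
    refine sub_nonneg.1 (nonneg_of_mul_nonneg_right (a := (k + 2 : R)) ?_ (by positivity))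
    rw [sum_of_squares]
    positivity

/-- The elementary symmetric mean: the average of the products of `k` elements of `s`.
The junk value of the division is harmless, because `s.esymm k = 0` when `s.card < k`. -/
noncomputable def esymmMean {K : Type*} [Semifield K] (s : Multiset K) (k : ℕ) : K :=
  s.esymm k / s.card.choose k

section Derivative

open Polynomial

theorem splits_derivative {p : ℝ[X]} (hp : p.Splits) : p.derivative.Splits := by
  obtain hconst | hpos := Nat.eq_zero_or_pos p.natDegree
  · exact .of_natDegree_eq_zero (by rw [natDegree_derivative, hconst])
  have rolle := card_roots_le_derivative p
  have card_roots_le := card_roots' p.derivative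
  rw [← hp.natDegree_eq_card_roots] at rolle
  rw [natDegree_derivative] at card_roots_le
  rw [splits_iff_card_roots, natDegree_derivative]
  omega

variable {K : Type*} [Field K] [CharZero K] {p : K[X]} {i : ℕ}

theorem natDegree_mul_esymm_roots_derivative (hp : p.Splits) (hp' : p.derivative.Splits)
    (hi : i < p.natDegree) :
    p.natDegree * p.derivative.roots.esymm i = (p.natDegree - i) * p.roots.esymm i := by
  obtain ⟨m, hm⟩ : ∃ m, p.natDegree = m + 1 + i := ⟨p.natDegree - 1 - i, by omega⟩
  have natDegree_derivative_eq : p.derivative.natDegree = m + i := by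
    rw [natDegree_derivative, hm]; omega
  have vieta := coeff_eq_esymm_roots_of_splits hp (k := m + 1) (by omega)
  have vieta' := coeff_eq_esymm_roots_of_splits hp' (k := m) (by omega)
  rw [coeff_derivative, vieta, leadingCoeff_derivative, natDegree_derivative_eq, hm,
    Nat.add_sub_cancel_left, Nat.add_sub_cancel_left] at vieta'
  have hlead : p.leadingCoeff * (-1) ^ i ≠ 0 := by
    have : p ≠ 0 := by rintro rfl; simp at hi
    simp [this]
  refine mul_left_cancel₀ hlead ?_
  rw [hm]
  push_cast at vieta' ⊢
  linear_combination -vieta'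

theorem esymmMean_roots_derivative (hp : p.Splits) (hp' : p.derivative.Splits)
    (hi : i < p.natDegree) : esymmMean p.derivative.roots i = esymmMean p.roots i := by
  obtain ⟨N, hN⟩ : ∃ N, p.natDegree = N + 1 := ⟨p.natDegree - 1, by omega⟩
  have esymm_eq := natDegree_mul_esymm_roots_derivative hp hp' hi
  have choose_eq : (N.choose i : K) * (N + 1) = (N + 1).choose i * (N + 1 - i) := by
    have := congrArg (Nat.cast (R := K)) (Nat.choose_mul_succ_eq N i)
    push_cast [Nat.cast_sub (show i ≤ N + 1 by omega)] at this
    exact this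
  have choose_ne : (N.choose i : K) ≠ 0 := by
    exact_mod_cast (Nat.choose_pos (by omega)).ne'
  have choose_succ_ne : ((N + 1).choose i : K) ≠ 0 := by
    exact_mod_cast (Nat.choose_pos (by omega)).ne'
  rw [esymmMean, esymmMean, ← hp.natDegree_eq_card_roots, ← hp'.natDegree_eq_card_roots,
    natDegree_derivative, hN, Nat.add_sub_cancel, div_eq_div_iff choose_ne choose_succ_ne]
  rw [hN] at esymm_eq
  push_cast at esymm_eq
  refine mul_right_cancel₀ (Nat.cast_add_one_ne_zero N) ?_
  linear_combination ((N + 1).choose i : K) * esymm_eq - p.roots.esymm i * choose_eq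

theorem exists_card_eq_esymmMean_eq {N : ℕ} {s : Multiset ℝ} (hs : s.card = N + 1) :
    ∃ t : Multiset ℝ, t.card = N ∧ ∀ i ≤ N, esymmMean t i = esymmMean s i := by
  set p : ℝ[X] := (s.map fun a => X - C a).prod
  have roots_eq : p.roots = s := roots_multiset_prod_X_sub_C s
  have natDegree_eq : p.natDegree = N + 1 := by
    rw [natDegree_multiset_prod_X_sub_C_eq_card, hs]
  have hp : p.Splits := by rw [splits_iff_card_roots, roots_eq, natDegree_eq, hs]
  have hp' := splits_derivative hp
  refine ⟨p.derivative.roots, ?_, fun i hi => ?_⟩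
  · rw [← hp'.natDegree_eq_card_roots, natDegree_derivative, natDegree_eq, Nat.add_sub_cancel]
  · rw [esymmMean_roots_derivative hp hp' (by omega), roots_eq]

end Derivative

theorem esymmMean_mul_le_sq_of_card_eq {K : Type*} [Field K] [LinearOrder K]
    [IsStrictOrderedRing K] {k : ℕ} {s : Multiset K} (hs : s.card = k + 2) :
    esymmMean s k * esymmMean s (k + 2) ≤ esymmMean s (k + 1) ^ 2 := by
  have choose_eq : ((k + 2).choose k : K) = (k + 2) * (k + 1) / 2 := by
    rw [Nat.choose_symm_add, Nat.cast_choose_two]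
    push_cast
    ring
  have choose_succ_eq : ((k + 2).choose (k + 1) : K) = k + 2 := by
    rw [Nat.choose_succ_self_right (k + 1)]
    push_cast
    ring
  simp only [esymmMean, hs, Nat.choose_self, choose_eq, choose_succ_eq, Nat.cast_one, div_one]
  rw [div_mul_eq_mul_div, div_pow, div_le_div_iff₀ (by positivity) (by positivity)]
  linarith [mul_le_mul_of_nonneg_left (multiset_esymm_mul_esymm_le_sq_of_card_eq hs)
    (by positivity : 0 ≤ ((k : K) + 2) / 2)]

theorem esymmMean_mul_le_sq (s : Multiset ℝ) (k : ℕ) :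
    esymmMean s k * esymmMean s (k + 2) ≤ esymmMean s (k + 1) ^ 2 := by
  obtain hlt | hle := lt_or_ge s.card (k + 2)
  · simpa [esymmMean, multiset_esymm_eq_zero_of_card_lt hlt] using sq_nonneg _
  obtain ⟨N, hN⟩ : ∃ N, s.card = N := ⟨_, rfl⟩
  rw [hN] at hle
  induction N, hle using Nat.le_induction generalizing s with
  | base => exact esymmMean_mul_le_sq_of_card_eq hN
  | succ N hle ih =>
    obtain ⟨t, ht, means_eq⟩ := exists_card_eq_esymmMean_eq hN
    rw [← means_eq k (by omega), ← means_eq (k + 1) (by omega), ← means_eq (k + 2) (by omega)]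
    exact ih t ht

section Slopes

variable {K : Type*} [Field K] [LinearOrder K] [IsStrictOrderedRing K] {L : ℕ → K}
  {k l r s a b c : ℕ}

theorem mul_sub_le_mul_sub_of_antitoneOn_succ_sub
    (hL : AntitoneOn (fun i => L (i + 1) - L i) (Set.Iio k))
    (hab : a ≤ b) (hbc : b ≤ c) (hck : c ≤ k) :
    ((b : K) - a) * (L c - L b) ≤ ((c : K) - b) * (L b - L a) := by
  obtain rfl | hlt := hbc.eq_or_lt
  · simp
  have right_le : L c - L b ≤ (c - b) * (L (b + 1) - L b) := by
    have := Finset.sum_le_card_nsmul (Ico b c) _ _ fun i hi =>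
      hL (Set.mem_Iio.2 (hlt.trans_le hck)) (Set.mem_Iio.2 ((mem_Ico.1 hi).2.trans_le hck))
        (mem_Ico.1 hi).1
    simpa [Finset.sum_Ico_sub L hbc, Nat.cast_sub hbc] using this
  have le_left : (b - a) * (L (b + 1) - L b) ≤ L b - L a := by
    have := Finset.card_nsmul_le_sum (Ico a b) _ _ fun i hi =>
      hL (Set.mem_Iio.2 ((mem_Ico.1 hi).2.trans (hlt.trans_le hck)))
        (Set.mem_Iio.2 (hlt.trans_le hck)) (mem_Ico.1 hi).2.le
    simpa [Finset.sum_Ico_sub L hab, Nat.cast_sub hab] using this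
  have sub_nonneg_ab : (0 : K) ≤ b - a := sub_nonneg.2 (by exact_mod_cast hab)
  have sub_nonneg_bc : (0 : K) ≤ c - b := sub_nonneg.2 (by exact_mod_cast hbc)
  calc ((b : K) - a) * (L c - L b) ≤ (b - a) * ((c - b) * (L (b + 1) - L b)) := by gcongr
    _ = (c - b) * ((b - a) * (L (b + 1) - L b)) := by ring
    _ ≤ (c - b) * (L b - L a) := by gcongr

theorem sub_div_le_sub_div_of_antitoneOn_succ_sub
    (hL : AntitoneOn (fun i => L (i + 1) - L i) (Set.Iio k))
    (hlk : l < k) (hsr : s < r) (hrk : r ≤ k) (hsl : s ≤ l) :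
    (L k - L l) / ((k : K) - l) ≤ (L r - L s) / ((r : K) - s) := by
  have three_slopes_l := mul_sub_le_mul_sub_of_antitoneOn_succ_sub hL hsl hlk.le le_rfl
  have three_slopes_r := mul_sub_le_mul_sub_of_antitoneOn_succ_sub hL hsr.le hrk le_rfl
  have hkl : (0 : K) < (k : K) - l := sub_pos.2 (by exact_mod_cast hlk)
  have hrs : (0 : K) < (r : K) - s := sub_pos.2 (by exact_mod_cast hsr)
  have hks : (0 : K) < (k : K) - s := sub_pos.2 (by exact_mod_cast hsl.trans_lt hlk)
  calc (L k - L l) / ((k : K) - l) ≤ (L k - L s) / ((k : K) - s) := by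
        rw [div_le_div_iff₀ hkl hks]; linarith
    _ ≤ (L r - L s) / ((r : K) - s) := by
        rw [div_le_div_iff₀ hks hrs]; linarith

end Slopes

section LogConcave

variable {p : ℕ → ℝ} {k l r s : ℕ}

theorem antitoneOn_log_sub_log_of_mul_le_sq (hpos : ∀ i ≤ k, 0 < p i)
    (hp : ∀ i, i + 2 ≤ k → p i * p (i + 2) ≤ p (i + 1) ^ 2) :
    AntitoneOn (fun i => Real.log (p (i + 1)) - Real.log (p i)) (Set.Iio k) := by
  refine antitoneOn_of_add_one_le Set.ordConnected_Iio fun i _ _ hi => ?_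
  have hik : i + 2 ≤ k := hi
  have h₀ := hpos i (by omega)
  have h₂ := hpos (i + 2) hik
  have log_le := Real.log_le_log (mul_pos h₀ h₂) (hp i hik)
  rw [Real.log_mul h₀.ne' h₂.ne', Real.log_pow] at log_le
  push_cast at log_le
  linarith

theorem rpow_div_le_rpow_div_of_mul_le_sq (hpos : ∀ i ≤ k, 0 < p i)
    (hp : ∀ i, i + 2 ≤ k → p i * p (i + 2) ≤ p (i + 1) ^ 2)
    (hlk : l < k) (hsr : s < r) (hrk : r ≤ k) (hsl : s ≤ l) :
    (p k / p l) ^ ((k : ℝ) - l)⁻¹ ≤ (p r / p s) ^ ((r : ℝ) - s)⁻¹ := by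
  have hk := hpos k le_rfl
  have hl := hpos l hlk.le
  have hr := hpos r hrk
  have hs := hpos s (hsl.trans hlk.le)
  rw [Real.rpow_def_of_pos (div_pos hk hl), Real.rpow_def_of_pos (div_pos hr hs),
    Real.log_div hk.ne' hl.ne', Real.log_div hr.ne' hs.ne', Real.exp_le_exp,
    ← div_eq_mul_inv, ← div_eq_mul_inv]
  exact sub_div_le_sub_div_of_antitoneOn_succ_sub (L := fun i => Real.log (p i))
    (antitoneOn_log_sub_log_of_mul_le_sq hpos hp) hlk hsr hrk hsl

end LogConcave

theorem esymm_div_choose_eq_esymmMean (n k : ℕ) (lam : Fin n → ℝ) :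
    esymm n k lam / n.choose k = esymmMean (univ.val.map lam) k := by
  rw [esymmMean, Finset.esymm_map_val, esymm]
  simp

theorem esymm_pos_of_mem_GammaCone {n k j : ℕ} {lam : Fin n → ℝ} (hlam : lam ∈ GammaCone n k)
    (hj : j ≤ k) : 0 < esymm n j lam := by
  obtain rfl | hj_pos := Nat.eq_zero_or_pos j
  · simp [esymm]
  · exact hlam j hj_pos hj

/-- Generalized Newton–MacLaurin inequality. -/
theorem generalized_newton_maclaurin (n k l r s : ℕ) (hn : 1 ≤ n)
    (hkn : k ≤ n) (hlk : l < k) (hsr : s < r) (hrk : r ≤ k) (hsl : s ≤ l)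
    (lam : Fin n → ℝ) (hlam : lam ∈ GammaCone n k) :
    ((esymm n k lam / (n.choose k : ℝ)) / (esymm n l lam / (n.choose l : ℝ)))
        ^ (((k : ℝ) - (l : ℝ))⁻¹)
      ≤ ((esymm n r lam / (n.choose r : ℝ)) / (esymm n s lam / (n.choose s : ℝ)))
        ^ (((r : ℝ) - (s : ℝ))⁻¹) := by
  have hpos : ∀ j ≤ k, 0 < esymmMean (univ.val.map lam) j := fun j hj => by
    rw [← esymm_div_choose_eq_esymmMean]
    exact div_pos (esymm_pos_of_mem_GammaCone hlam hj)
      (by exact_mod_cast Nat.choose_pos (hj.trans hkn))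
  simp only [esymm_div_choose_eq_esymmMean]
  exact rpow_div_le_rpow_div_of_mul_le_sq hpos (fun i _ => esymmMean_mul_le_sq _ i)
    hlk hsr hrk hsl
end

section
/- Let 2 ≤ k ≤ n and let β_0,…,β_{k−2} be nonnegative real numbers. Then for all λ, μ ∈ Γ_{k−1}, Σ_{i=1}^n f_i(λ) μ_i ≥ f(μ) + Σ_{l=0}^{k−2} (k−l) β_l σ_l(λ)/σ_{k−1}(λ). -/
/-!
Write `q_j = σ_{j+1} / σ_j`. A convex function `g`, homogeneous of degree `d`, satisfies
`Dg(λ) μ ≤ g(μ) + (d - 1) g(λ)`: this is the gradient inequality combined with Euler's identity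
`Dg(λ) λ = d g(λ)`. Applied to `-q_{k-1}` with `d = 1` and to `σ_l / σ_{k-1}` with
`d = l - k + 1`, it gives the estimate term by term, so what matters is that `q_{k-1}` is concave
and `σ_l / σ_{k-1}` is convex on `Γ_{k-1}`.

Concavity of `q_j` on `Γ_j` is an induction on `j`. By the Marcus–Lopes identity
`(j + 2) q_{j+1}(x) = ∑ i, (x_i - x_i ^ 2 / (x_i + q_j(x | i)))`, where `x | i` omits the `i`-th
variable, concavity of `q_j` passes to `q_{j+1}`, because `u ^ 2 / v` is convex for linear `u` and
positive concave `v`. That `x | i` stays in `Γ_j` for `x ∈ Γ_{j+1}` follows from Newton's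
inequality, and `Γ_{j+1}`, being the part of `Γ_j` where `q_j > 0`, is convex. Finally
`σ_l / σ_k = exp (-∑_{l ≤ j < k} log q_j)` is convex.
-/

open Finset

/-- The mixed Hessian operator
`f(λ) = σ_k(λ)/σ_{k-1}(λ) - ∑_{l=0}^{k-2} β_l σ_l(λ)/σ_{k-1}(λ)`. -/
noncomputable def fmix (n k : ℕ) (β : ℕ → ℝ) (lam : Fin n → ℝ) : ℝ :=
  esymm n k lam / esymm n (k-1) lam
    - ∑ l ∈ Finset.range (k-1), β l * (esymm n l lam / esymm n (k-1) lam)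

theorem concaveOn_sum {ι 𝕜 E β : Type*} [Semiring 𝕜] [PartialOrder 𝕜] [AddCommMonoid E] [SMul 𝕜 E]
    [AddCommMonoid β] [PartialOrder β] [IsOrderedAddMonoid β] [Module 𝕜 β] {S : Set E}
    {t : Finset ι} {f : ι → E → β} (hS : Convex 𝕜 S) (hf : ∀ i ∈ t, ConcaveOn 𝕜 S (f i)) :
    ConcaveOn 𝕜 S fun x ↦ ∑ i ∈ t, f i x := by
  simp only [← Finset.sum_apply]
  exact sum_induction f (ConcaveOn 𝕜 S) (fun _ _ ↦ ConcaveOn.add) (concaveOn_const 0 hS) hf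

section HomogeneousConvex

variable {E : Type*}

section Module

variable [AddCommGroup E] [Module ℝ E] {S : Set E}

theorem concaveOn_log_comp {f : E → ℝ} (hf : ConcaveOn ℝ S f) (hpos : ∀ x ∈ S, 0 < f x) :
    ConcaveOn ℝ S fun x ↦ Real.log (f x) := by
  refine ⟨hf.1, fun x hx y hy a b ha hb hab ↦ ?_⟩
  have hlog := strictConcaveOn_log_Ioi.concaveOn
  exact (hlog.2 (hpos x hx) (hpos y hy) ha hb hab).trans <|
    Real.log_le_log (hlog.1 (hpos x hx) (hpos y hy) ha hb hab) (hf.2 hx hy ha hb hab)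

theorem convexOn_exp_comp {f : E → ℝ} (hf : ConvexOn ℝ S f) :
    ConvexOn ℝ S fun x ↦ Real.exp (f x) := by
  refine ⟨hf.1, fun x hx y hy a b ha hb hab ↦ ?_⟩
  exact (Real.exp_le_exp.2 (hf.2 hx hy ha hb hab)).trans <|
    convexOn_exp.2 (Set.mem_univ _) (Set.mem_univ _) ha hb hab

theorem convexOn_sq_div (u : E →ₗ[ℝ] ℝ) {v : E → ℝ} (hv : ConcaveOn ℝ S v)
    (hpos : ∀ x ∈ S, 0 < v x) : ConvexOn ℝ S fun x ↦ u x ^ 2 / v x := by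
  -- `u ^ 2 / v` is the supremum over `t` of `2 * t * u - t ^ 2 * v`, attained at `t = u / v`.
  have tangent_le (t : ℝ) {x : E} (hx : x ∈ S) : 2 * t * u x - t ^ 2 * v x ≤ u x ^ 2 / v x := by
    rw [le_div_iff₀ (hpos x hx)]
    linarith [sq_nonneg (u x - t * v x)]
  refine ⟨hv.1, fun x hx y hy a b ha hb hab ↦ ?_⟩
  have hz := hpos _ (hv.1 hx hy ha hb hab)
  set z := a • x + b • y with hz_def
  set t := u z / v z
  have huz : u z = a * u x + b * u y := by simp [hz_def]
  calc u z ^ 2 / v z = 2 * t * u z - t ^ 2 * v z := by simp only [t]; field_simp; ring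
    _ ≤ 2 * t * u z - t ^ 2 * (a * v x + b * v y) := by
      gcongr
      exact hv.2 hx hy ha hb hab
    _ = a * (2 * t * u x - t ^ 2 * v x) + b * (2 * t * u y - t ^ 2 * v y) := by rw [huz]; ring
    _ ≤ a • (u x ^ 2 / v x) + b • (u y ^ 2 / v y) := by
      simp only [smul_eq_mul]
      gcongr
      exacts [tangent_le t hx, tangent_le t hy]

end Module

variable [NormedAddCommGroup E] [NormedSpace ℝ E] {S : Set E} {f : E → ℝ} {x y : E}

theorem fderiv_apply_sub_le_of_convexOn (hf : ConvexOn ℝ S f) (hd : DifferentiableAt ℝ f x)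
    (hx : x ∈ S) (hy : y ∈ S) : fderiv ℝ f x (y - x) ≤ f y - f x := by
  have hline : HasDerivAt (f ∘ AffineMap.lineMap x y) (fderiv ℝ f x (y - x)) (0 : ℝ) := by
    refine HasFDerivAt.comp_hasDerivAt 0 ?_ AffineMap.hasDerivAt_lineMap
    simpa using hd.hasFDerivAt
  simpa [slope_def_field] using (hf.comp_affineMap (AffineMap.lineMap x y)).le_slope_of_hasDerivAt
    (x := 0) (y := 1) (by simpa) (by simpa) one_pos hline

theorem fderiv_apply_self_of_homogeneous {d : ℤ} (hd : DifferentiableAt ℝ f x)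
    (hom : ∀ t : ℝ, 0 < t → f (t • x) = t ^ d * f x) : fderiv ℝ f x x = d * f x := by
  have hray : HasDerivAt (fun t : ℝ ↦ f (t • x)) (fderiv ℝ f x x) 1 := by
    refine HasFDerivAt.comp_hasDerivAt (f := fun t : ℝ ↦ t • x) 1 ?_ ?_
    · simpa using hd.hasFDerivAt
    · simpa using (hasDerivAt_id (1 : ℝ)).smul_const x
  have hpow : HasDerivAt (fun t : ℝ ↦ t ^ d * f x) (d * f x) 1 := by
    simpa using (hasDerivAt_zpow d (1 : ℝ) (by simp)).mul_const (f x)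
  refine hray.unique (hpow.congr_of_eventuallyEq ?_)
  filter_upwards [eventually_gt_nhds one_pos] with t ht using hom t ht

theorem fderiv_apply_le_of_convexOn_of_homogeneous {d : ℤ} (hf : ConvexOn ℝ S f)
    (hd : DifferentiableAt ℝ f x) (hom : ∀ t : ℝ, 0 < t → f (t • x) = t ^ d * f x)
    (hx : x ∈ S) (hy : y ∈ S) : fderiv ℝ f x y ≤ f y + (d - 1) * f x := by
  have h := fderiv_apply_sub_le_of_convexOn hf hd hx hy
  rw [map_sub, fderiv_apply_self_of_homogeneous hd hom] at h
  linarith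

theorem le_fderiv_apply_of_concaveOn_of_homogeneous {d : ℤ} (hf : ConcaveOn ℝ S f)
    (hd : DifferentiableAt ℝ f x) (hom : ∀ t : ℝ, 0 < t → f (t • x) = t ^ d * f x)
    (hx : x ∈ S) (hy : y ∈ S) : f y + (d - 1) * f x ≤ fderiv ℝ f x y := by
  have h := fderiv_apply_le_of_convexOn_of_homogeneous (d := d) hf.neg hd.neg
    (fun t ht ↦ by simp [hom t ht]) hx hy
  simp only [fderiv_neg, Pi.neg_apply, neg_apply] at h
  linarith

end HomogeneousConvex

section RealRooted

open Polynomial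

variable {p : ℝ[X]}

theorem splits_derivative_s2 (hp : p.Splits) : (derivative p).Splits := by
  rcases Nat.eq_zero_or_pos p.natDegree with hconst | hpos
  · rw [derivative_of_natDegree_zero hconst]
    exact Splits.zero
  · have hcard := card_roots_le_derivative p
    have hdeg := natDegree_derivative_lt hpos.ne'
    have hle := card_roots' (derivative p)
    rw [splits_iff_card_roots] at hp ⊢
    omega

theorem eval_mul_eval_derivative_derivative_le_sq_of_splits (hp : p.Splits) (t : ℝ) :
    p.eval t * (derivative (derivative p)).eval t ≤ (derivative p).eval t ^ 2 := by
  obtain ⟨roots, hroots⟩ := splits_iff_exists_multiset'.1 hp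
  rw [hroots]
  generalize p.leadingCoeff = c
  clear hroots hp
  induction roots using Multiset.induction_on with
  | empty => simp
  | cons a m ih =>
    rw [Multiset.map_cons, Multiset.prod_cons, mul_left_comm]
    set q := C c * (m.map fun b ↦ X + C b).prod
    have hq : 0 ≤ (derivative q).eval t ^ 2 - q.eval t * (derivative (derivative q)).eval t :=
      sub_nonneg.2 ih
    simp only [derivative_mul, derivative_add, derivative_X, derivative_C, eval_add, eval_mul,
      eval_X, eval_C, add_zero, one_mul]
    linarith [mul_nonneg (sq_nonneg (t + a)) hq, sq_nonneg (q.eval t)]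

theorem coeff_mul_coeff_le_sq_of_splits (hp : p.Splits) (k : ℕ) :
    (k + 2) * (p.coeff k * p.coeff (k + 2)) ≤ (k + 1) * p.coeff (k + 1) ^ 2 := by
  -- Differentiation shifts the coefficients, which reduces to Laguerre's inequality at `0`.
  induction k generalizing p with
  | zero =>
    have h := eval_mul_eval_derivative_derivative_le_sq_of_splits hp 0
    simp only [← coeff_zero_eq_eval_zero, coeff_derivative] at h
    norm_num at h ⊢
    linarith
  | succ k ih =>
    have h := ih (splits_derivative_s2 hp)
    simp only [coeff_derivative] at h
    push_cast at h ⊢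
    refine le_of_mul_le_mul_left (a := (k + 1 : ℝ) * (k + 2)) ?_ (by positivity)
    linarith

end RealRooted

/-- The `k`-th elementary symmetric function `σ_k` of the variables `x i` with `i ∈ s`. The index
set is a parameter because the induction for the Gårding cone deletes variables. -/
def esymmOn {ι R : Type*} [CommSemiring R] (s : Finset ι) (k : ℕ) (x : ι → R) : R :=
  ∑ t ∈ powersetCard k s, ∏ i ∈ t, x i

section ElementarySymmetric

variable {ι R : Type*} [CommSemiring R]

@[simp]
theorem esymmOn_zero (s : Finset ι) (x : ι → R) : esymmOn s 0 x = 1 := by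
  simp [esymmOn]

theorem esymmOn_one (s : Finset ι) (x : ι → R) : esymmOn s 1 x = ∑ i ∈ s, x i := by
  simp [esymmOn, powersetCard_one]

theorem esymmOn_smul (s : Finset ι) (k : ℕ) (t : R) (x : ι → R) :
    esymmOn s k (t • x) = t ^ k * esymmOn s k x := by
  rw [esymmOn, esymmOn, mul_sum]
  refine sum_congr rfl fun u hu ↦ ?_
  simp [prod_mul_distrib, (mem_powersetCard.1 hu).2]

section GeneratingPolynomial

open Polynomial

theorem coeff_prod_one_add_C_mul_X (s : Finset ι) (x : ι → R) (k : ℕ) :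
    (∏ i ∈ s, (1 + C (x i) * X)).coeff k = esymmOn s k x := by
  simp only [prod_one_add, finsetSum_coeff, prod_mul_distrib, prod_const, ← map_prod,
    coeff_C_mul_X_pow, esymmOn, powersetCard_eq_filter, sum_filter, eq_comm (a := k)]

theorem esymmOn_mul_esymmOn_le_sq (s : Finset ι) (k : ℕ) (x : ι → ℝ) :
    (k + 2) * (esymmOn s k x * esymmOn s (k + 2) x) ≤ (k + 1) * esymmOn s (k + 1) x ^ 2 := by
  have hs : (∏ i ∈ s, (1 + C (x i) * X)).Splits :=
    Splits.prod fun i _ ↦ Splits.of_natDegree_le_one (by compute_degree)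
  simpa only [coeff_prod_one_add_C_mul_X] using coeff_mul_coeff_le_sq_of_splits hs k

variable [DecidableEq ι]

theorem esymmOn_succ_eq_erase {s : Finset ι} {i : ι} (hi : i ∈ s) (k : ℕ) (x : ι → R) :
    esymmOn s (k + 1) x = esymmOn (s.erase i) (k + 1) x + x i * esymmOn (s.erase i) k x := by
  simp only [← coeff_prod_one_add_C_mul_X]
  rw [← mul_prod_erase s _ hi, add_mul, one_mul, mul_assoc, coeff_add, coeff_C_mul, coeff_X_mul]

theorem sum_mul_esymmOn_erase (s : Finset ι) (k : ℕ) (x : ι → R) :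
    ∑ i ∈ s, x i * esymmOn (s.erase i) k x = (k + 1) * esymmOn s (k + 1) x := by
  have h := congrArg (coeff · k) (derivative_prod_finset (s := s) (f := fun i ↦ 1 + C (x i) * X))
  simp only [coeff_derivative, coeff_prod_one_add_C_mul_X, derivative_add, derivative_one,
    derivative_C_mul, derivative_X, zero_add, mul_one, finsetSum_coeff, coeff_mul_C] at h
  rw [mul_comm, h]
  exact sum_congr rfl fun i _ ↦ mul_comm _ _

end GeneratingPolynomial

theorem differentiable_esymmOn {𝕜 : Type*} [NontriviallyNormedField 𝕜] [Finite ι] (s : Finset ι)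
    (k : ℕ) : Differentiable 𝕜 (esymmOn s k : (ι → 𝕜) → 𝕜) := by
  cases nonempty_fintype ι
  unfold esymmOn
  fun_prop

end ElementarySymmetric

/-- The quotient `σ_k / σ_l` in the variables indexed by `s`, equal to `0` where `σ_l` vanishes. -/
def esymmQuot {ι K : Type*} [Field K] (s : Finset ι) (k l : ℕ) (x : ι → K) : K :=
  esymmOn s k x / esymmOn s l x

section Quotient

variable {ι K : Type*}

section Field

variable [Field K]

theorem esymmQuot_smul (s : Finset ι) (k l : ℕ) {t : K} (ht : t ≠ 0) (x : ι → K) :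
    esymmQuot s k l (t • x) = t ^ (k - l : ℤ) * esymmQuot s k l x := by
  rw [esymmQuot, esymmQuot, esymmOn_smul, esymmOn_smul, mul_div_mul_comm, zpow_sub₀ ht,
    zpow_natCast, zpow_natCast]

variable [DecidableEq ι] {s : Finset ι} {k : ℕ} {x : ι → K}

theorem add_esymmQuot_erase {i : ι} (hi : i ∈ s) (hx : esymmOn (s.erase i) k x ≠ 0) :
    x i + esymmQuot (s.erase i) (k + 1) k x = esymmOn s (k + 1) x / esymmOn (s.erase i) k x := by
  rw [esymmOn_succ_eq_erase hi, esymmQuot]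
  field_simp
  ring

theorem mul_esymmQuot_eq_sum (hx : esymmOn s (k + 1) x ≠ 0)
    (hxi : ∀ i ∈ s, esymmOn (s.erase i) k x ≠ 0) :
    (k + 2) * esymmQuot s (k + 2) (k + 1) x
      = ∑ i ∈ s, (x i - x i ^ 2 / (x i + esymmQuot (s.erase i) (k + 1) k x)) := by
  have hterm : ∀ i ∈ s, x i - x i ^ 2 / (x i + esymmQuot (s.erase i) (k + 1) k x)
      = x i * esymmOn (s.erase i) (k + 1) x / esymmOn s (k + 1) x := by
    intro i hi
    have hxi := hxi i hi
    rw [add_esymmQuot_erase hi hxi]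
    field_simp
    rw [esymmOn_succ_eq_erase hi]
    ring
  rw [sum_congr rfl hterm, ← sum_div, sum_mul_esymmOn_erase, esymmQuot]
  push_cast
  ring

end Field

theorem differentiableAt_esymmQuot [NontriviallyNormedField K] [Finite ι] (s : Finset ι) (k : ℕ)
    {l : ℕ} {x : ι → K} (hx : esymmOn s l x ≠ 0) : DifferentiableAt K (esymmQuot s k l) x := by
  cases nonempty_fintype ι
  simp only [funext (esymmQuot.eq_def s k l), div_eq_mul_inv]
  exact (differentiable_esymmOn s k x).mul ((differentiable_esymmOn s l x).inv hx)

end Quotient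

/-- The Gårding cone `Γ_k` in the variables indexed by `s`. The condition at `j = 0` is vacuous, as
`σ_0 = 1`; including it gives positive denominators for all quotients `σ_j / σ_l` with `l ≤ k`. -/
def gammaConeOn {ι : Type*} (s : Finset ι) (k : ℕ) : Set (ι → ℝ) :=
  {x | ∀ j ≤ k, 0 < esymmOn s j x}

section GardingCone

variable {ι : Type*} {s : Finset ι} {k : ℕ}

theorem gammaConeOn_zero (s : Finset ι) : gammaConeOn s 0 = Set.univ := by
  simp [gammaConeOn]

theorem gammaConeOn_anti (s : Finset ι) : Antitone (gammaConeOn s) :=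
  fun _ _ hkl _ hx j hj ↦ hx j (hj.trans hkl)

theorem gammaConeOn_succ (s : Finset ι) (k : ℕ) :
    gammaConeOn s (k + 1) = {x ∈ gammaConeOn s k | 0 < esymmOn s (k + 1) x} := by
  ext x
  simp [gammaConeOn, Nat.le_succ_iff, or_imp, forall_and]

theorem gammaConeOn_succ_eq_esymmQuot_pos (s : Finset ι) (k : ℕ) :
    gammaConeOn s (k + 1) = {x ∈ gammaConeOn s k | 0 < esymmQuot s (k + 1) k x} := by
  rw [gammaConeOn_succ]
  ext x
  exact and_congr_right fun hx ↦ (div_pos_iff_of_pos_right (hx k le_rfl)).symm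

theorem gammaConeOn_succ_subset_erase [DecidableEq ι] {i : ι} (hi : i ∈ s) :
    gammaConeOn s (k + 1) ⊆ gammaConeOn (s.erase i) k := by
  induction k with
  | zero => simp [gammaConeOn_zero]
  | succ k ih =>
    intro x hx
    have hxi := ih (gammaConeOn_anti s (Nat.le_succ _) hx)
    rw [gammaConeOn_succ]
    refine ⟨hxi, ?_⟩
    have hk := hxi k le_rfl
    have hk1 := hx (k + 1) (by lia)
    have hk2 := hx (k + 2) le_rfl
    rw [esymmOn_succ_eq_erase hi] at hk1 hk2
    have newton := esymmOn_mul_esymmOn_le_sq (s.erase i) k x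
    generalize esymmOn (s.erase i) k x = a at *
    generalize esymmOn (s.erase i) (k + 1) x = b at *
    generalize esymmOn (s.erase i) (k + 2) x = c at *
    -- If `b ≤ 0`, then `a * c > -(x i * a) * b ≥ b ^ 2`, contradicting Newton's inequality.
    by_contra! hb
    have hac : b ^ 2 < a * c := by
      linarith [mul_pos hk hk2, mul_nonneg hk1.le (neg_nonneg.2 hb)]
    nlinarith [sq_nonneg b]

theorem add_esymmQuot_erase_pos [DecidableEq ι] {i : ι} (hi : i ∈ s) {x : ι → ℝ}
    (hx : x ∈ gammaConeOn s (k + 1)) : 0 < x i + esymmQuot (s.erase i) (k + 1) k x := by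
  have hxi := gammaConeOn_succ_subset_erase hi hx k le_rfl
  rw [add_esymmQuot_erase hi hxi.ne']
  exact div_pos (hx _ le_rfl) hxi

theorem concaveOn_esymmQuot_succ (s : Finset ι) (k : ℕ) :
    ConcaveOn ℝ (gammaConeOn s k) (esymmQuot s (k + 1) k) := by
  classical
  induction k generalizing s with
  | zero =>
    have hsum : esymmQuot s 1 0 = ∑ i ∈ s, LinearMap.proj (R := ℝ) (φ := fun _ : ι ↦ ℝ) i := by
      ext x
      simp [esymmQuot, esymmOn_one]
    rw [gammaConeOn_zero, zero_add, hsum]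
    exact LinearMap.concaveOn _ convex_univ
  | succ k ih =>
    have hconvex : Convex ℝ (gammaConeOn s (k + 1)) := by
      rw [gammaConeOn_succ_eq_esymmQuot_pos]
      exact (ih s).convex_gt 0
    have hterm : ∀ i ∈ s, ConcaveOn ℝ (gammaConeOn s (k + 1)) fun x ↦
        x i - x i ^ 2 / (x i + esymmQuot (s.erase i) (k + 1) k x) := by
      intro i hi
      have hproj := (LinearMap.proj (R := ℝ) (φ := fun _ : ι ↦ ℝ) i).concaveOn hconvex
      have herase := (ih (s.erase i)).subset (gammaConeOn_succ_subset_erase hi) hconvex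
      exact hproj.sub <| convexOn_sq_div (LinearMap.proj i) (hproj.add herase)
        fun x hx ↦ add_esymmQuot_erase_pos hi hx
    refine ((concaveOn_sum hconvex hterm).smul (c := (k + 2 : ℝ)⁻¹) (by positivity)).congr ?_
    intro x hx
    have hxi : ∀ i ∈ s, esymmOn (s.erase i) k x ≠ 0 := fun i hi ↦
      (gammaConeOn_succ_subset_erase hi hx k le_rfl).ne'
    simp only [smul_eq_mul]
    rw [← mul_esymmQuot_eq_sum (hx _ le_rfl).ne' hxi,
      inv_mul_cancel_left₀ (by positivity)]

theorem convexOn_esymmQuot (s : Finset ι) {k l : ℕ} (hlk : l ≤ k) :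
    ConvexOn ℝ (gammaConeOn s k) (esymmQuot s l k) := by
  have hconvex := (concaveOn_esymmQuot_succ s k).1
  have hlog : ∀ j ∈ Ico l k, ConcaveOn ℝ (gammaConeOn s k)
      fun x ↦ Real.log (esymmQuot s (j + 1) j x) := by
    intro j hj
    have hjk : j + 1 ≤ k := (mem_Ico.1 hj).2
    have hsub : gammaConeOn s k ⊆ gammaConeOn s j := gammaConeOn_anti s (by lia)
    exact concaveOn_log_comp ((concaveOn_esymmQuot_succ s j).subset hsub hconvex)
      fun x hx ↦ div_pos (hx _ hjk) (hx _ (by lia))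
  refine (convexOn_exp_comp (concaveOn_sum hconvex hlog).neg).congr fun x hx ↦ ?_
  have hne : ∀ j ≤ k, esymmOn s j x ≠ 0 := fun j hj ↦ (hx j hj).ne'
  have htelescope : ∑ j ∈ Ico l k, Real.log (esymmQuot s (j + 1) j x)
      = Real.log (esymmOn s k x) - Real.log (esymmOn s l x) := by
    rw [← sum_Ico_sub (fun j ↦ Real.log (esymmOn s j x)) hlk]
    refine sum_congr rfl fun j hj ↦ Real.log_div (hne _ ?_) (hne _ ?_) <;> grind
  simp only [Pi.neg_apply]
  rw [htelescope, neg_sub, Real.exp_sub, Real.exp_log (hx l hlk),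
    Real.exp_log (hx k le_rfl), esymmQuot]

variable [Finite ι] {x y : ι → ℝ}

theorem esymmQuot_succ_le_fderiv (hx : x ∈ gammaConeOn s k) (hy : y ∈ gammaConeOn s k) :
    esymmQuot s (k + 1) k y ≤ fderiv ℝ (esymmQuot s (k + 1) k) x y := by
  cases nonempty_fintype ι
  simpa using le_fderiv_apply_of_concaveOn_of_homogeneous (concaveOn_esymmQuot_succ s k)
    (differentiableAt_esymmQuot s (k + 1) (hx k le_rfl).ne')
    (fun t ht ↦ esymmQuot_smul s (k + 1) k ht.ne' x) hx hy

theorem fderiv_esymmQuot_le {l : ℕ} (hlk : l ≤ k) (hx : x ∈ gammaConeOn s k)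
    (hy : y ∈ gammaConeOn s k) :
    fderiv ℝ (esymmQuot s l k) x y ≤ esymmQuot s l k y + (l - k - 1) * esymmQuot s l k x := by
  cases nonempty_fintype ι
  simpa using fderiv_apply_le_of_convexOn_of_homogeneous (convexOn_esymmQuot s hlk)
    (differentiableAt_esymmQuot s l (hx k le_rfl).ne')
    (fun t ht ↦ esymmQuot_smul s l k ht.ne' x) hx hy

end GardingCone

section MixedHessianOperator

theorem sum_apply_single_mul {ι R F : Type*} [Fintype ι] [DecidableEq ι] [CommSemiring R]
    [FunLike F (ι → R) R] [LinearMapClass F R (ι → R) R] (f : F) (x : ι → R) :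
    ∑ i, f (Pi.single i 1) * x i = f x := by
  conv_rhs => rw [← univ_sum_single x, map_sum]
  refine sum_congr rfl fun i _ ↦ ?_
  rw [mul_comm, ← smul_eq_mul, ← map_smul, ← Pi.single_smul, smul_eq_mul, mul_one]

theorem GammaCone_eq_gammaConeOn (n k : ℕ) : GammaCone n k = gammaConeOn univ k := by
  ext x
  refine ⟨fun hx j hj ↦ ?_, fun hx j _ hj ↦ hx j hj⟩
  rcases Nat.eq_zero_or_pos j with rfl | hpos
  · simp
  · exact hx j hpos hj

theorem fderiv_fmix_apply {n k : ℕ} (β : ℕ → ℝ) {x : Fin n → ℝ}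
    (hx : esymm n (k - 1) x ≠ 0) (y : Fin n → ℝ) :
    fderiv ℝ (fmix n k β) x y = fderiv ℝ (esymmQuot univ k (k - 1)) x y
      - ∑ l ∈ range (k - 1), β l * fderiv ℝ (esymmQuot univ l (k - 1)) x y := by
  have hquot (l : ℕ) := (differentiableAt_esymmQuot univ l hx).hasFDerivAt
  have hfmix : HasFDerivAt (fmix n k β) _ x :=
    (hquot k).fun_sub (.fun_sum fun l (_ : l ∈ range (k - 1)) ↦ (hquot l).const_mul (β l))
  simp [hfmix.fderiv]

end MixedHessianOperator

/-- Concavity estimate: `∑ᵢ fᵢ(λ) μᵢ ≥ f(μ) + ∑_{l=0}^{k-2} (k-l) β_l σ_l(λ)/σ_{k-1}(λ)`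
for `λ, μ` in the Gårding cone `Γ_{k-1}`. -/
theorem fmix_deriv_pairing_lower_bound (n k : ℕ) (hk2 : 2 ≤ k) (hkn : k ≤ n)
    (β : ℕ → ℝ) (hβ : ∀ l, l ≤ k - 2 → 0 ≤ β l)
    (lam mu : Fin n → ℝ)
    (hlam : lam ∈ GammaCone n (k-1)) (hmu : mu ∈ GammaCone n (k-1)) :
    fmix n k β mu + ∑ l ∈ Finset.range (k-1),
        ((k : ℝ) - (l : ℝ)) * β l * (esymm n l lam / esymm n (k-1) lam)
      ≤ ∑ i : Fin n, fderiv ℝ (fmix n k β) lam (Pi.single i 1) * mu i := by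
  rw [GammaCone_eq_gammaConeOn] at hlam hmu
  have hleading : esymmQuot univ k (k - 1) mu ≤ fderiv ℝ (esymmQuot univ k (k - 1)) lam mu := by
    simpa only [Nat.sub_add_cancel (one_le_two.trans hk2)] using esymmQuot_succ_le_fderiv hlam hmu
  have hlower : ∀ l ∈ range (k - 1), β l * fderiv ℝ (esymmQuot univ l (k - 1)) lam mu
      ≤ β l * esymmQuot univ l (k - 1) mu - (k - l) * β l * esymmQuot univ l (k - 1) lam := by
    intro l hl
    have hlk : l < k - 1 := mem_range.1 hl
    have h := mul_le_mul_of_nonneg_left (fderiv_esymmQuot_le hlk.le hlam hmu) (hβ l (by lia))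
    rw [Nat.cast_pred (by lia)] at h
    linarith
  calc _ = esymmQuot univ k (k - 1) mu - ∑ l ∈ range (k - 1), (β l * esymmQuot univ l (k - 1) mu
          - (k - l) * β l * esymmQuot univ l (k - 1) lam) := by
        rw [sum_sub_distrib, ← sub_add]
        rfl
    _ ≤ fderiv ℝ (esymmQuot univ k (k - 1)) lam mu
          - ∑ l ∈ range (k - 1), β l * fderiv ℝ (esymmQuot univ l (k - 1)) lam mu :=
        sub_le_sub hleading (sum_le_sum hlower)
    _ = _ := by rw [sum_apply_single_mul, fderiv_fmix_apply β (hlam (k - 1) le_rfl).ne']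
end
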